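/- Let (A*,w*) be an optimal solution to the maximin support instance with t*=supp_{w*}(A*), and let (A,w) be a balanced solution with |A|≤k and A≠A*. Then for every a with 0<a≤1, ∑_{c'∈A*∖A} prescore_{(A,w)}(c', a·t*) ≥ |A*∖A| · a·t* · (1/a − 1 + ln a). -/

import Mathlib

/-!
The argument is a layer-cake decomposition of the slack followed by a counting bound.

Write `D = Astar \ A`, `t = a * tstar`, and call a voter *high at level `τ`* if every member of `A`
she approves has support at least `τ`; otherwise she is *low*. A voter approving a member of `A`
spends all her strength on `A` (`sum_weights_eq`), hence her slack is
`∑ c ∈ A, w n c * (1 - min 1 (t / supp c))`, and, for `t ≤ tstar` and `p ≥ 0`,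
`1 - min 1 (t / p) ≥ ∫ τ in t..tstar, 1[τ ≤ p] * t / τ²`.
So her slack (and trivially that of a voter approving no member of `A`) is at least `s n` times the
integral of `t / τ²` over the levels in `[t, tstar]` at which she is high (`integral_le_slack`).

It remains to bound, for each level `τ` with `0 ≤ τ ≤ tstar`, the strength of high voters counted
over all `c' ∈ D` from below by `|D| * (tstar - τ)` (`high_strength`). Let `X` be the members of `A`
with support below `τ`. In a balanced solution a low voter gives weight to no member of `A` outside
`X` (`weight_eq_zero`), so the low voters have total strength at most `|X| * τ`. Under `wstar` the
candidates in `D ∪ (X ∩ Astar)` receive at least `tstar` each, and high voters approve no one in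
`X`; since `|X \ Astar| ≤ |A \ Astar| ≤ |D|`, the high voters must provide the rest. Integrating
`|D| * (tstar - τ) * t / τ²` from `t` to `tstar` gives the stated bound.
-/

open Finset

section Defs

variable {V Cand : Type*} [Fintype V] [Fintype Cand] [DecidableEq V] [DecidableEq Cand]

/-- The set `C_n` of candidates approved by voter `n`. -/
def approves (edge : V → Cand → Prop) [∀ n c, Decidable (edge n c)] (n : V) : Finset Cand :=
  Finset.univ.filter (fun c => edge n c)

/-- The set `N_c` of voters approving candidate `c`. -/
def approvers (edge : V → Cand → Prop) [∀ n c, Decidable (edge n c)] (c : Cand) : Finset V :=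
  Finset.univ.filter (fun n => edge n c)

/-- Feasibility of an edge-weight vector: nonnegative, supported on the edges of the
approval graph, and the total weight assigned by each voter is at most her vote strength. -/
def Feasible (edge : V → Cand → Prop) [∀ n c, Decidable (edge n c)]
    (s : V → ℝ) (w : V → Cand → ℝ) : Prop :=
  (∀ n c, 0 ≤ w n c) ∧ (∀ n c, ¬ edge n c → w n c = 0) ∧
    ∀ n, ∑ c ∈ approves edge n, w n c ≤ s n

/-- The support `supp_w(c)` of a candidate. -/
noncomputable def supp (edge : V → Cand → Prop) [∀ n c, Decidable (edge n c)]
    (w : V → Cand → ℝ) (c : Cand) : ℝ :=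
  ∑ n ∈ approvers edge c, w n c

/-- `supp_w(A) = min_{c ∈ A} supp_w(c)`, valued in `EReal` with the convention
`supp_w(∅) = ∞`. -/
noncomputable def suppMin (edge : V → Cand → Prop) [∀ n c, Decidable (edge n c)]
    (w : V → Cand → ℝ) (A : Finset Cand) : EReal :=
  A.inf (fun c => (supp edge w c : EReal))

/-- `w` is balanced for `A`: among feasible vectors it maximizes the sum of member supports
and, subject to that, minimizes the sum of squared member supports. -/
def BalancedWeight (edge : V → Cand → Prop) [∀ n c, Decidable (edge n c)] (s : V → ℝ)
    (A : Finset Cand) (w : V → Cand → ℝ) : Prop :=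
  Feasible edge s w ∧
  (∀ w', Feasible edge s w' → ∑ c ∈ A, supp edge w' c ≤ ∑ c ∈ A, supp edge w c) ∧
  (∀ w', Feasible edge s w' → ∑ c ∈ A, supp edge w' c = ∑ c ∈ A, supp edge w c →
    ∑ c ∈ A, (supp edge w c) ^ 2 ≤ ∑ c ∈ A, (supp edge w' c) ^ 2)

/-- The slack of voter `n` at threshold `t`, relative to the solution `(A, w)`. -/
noncomputable def slack (edge : V → Cand → Prop) [∀ n c, Decidable (edge n c)] (s : V → ℝ)
    (A : Finset Cand) (w : V → Cand → ℝ) (n : V) (t : ℝ) : ℝ :=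
  s n - ∑ c ∈ A ∩ approves edge n, w n c * min 1 (t / supp edge w c)

/-- The pre-score of an unelected candidate `c'` at threshold `t`. -/
noncomputable def prescore (edge : V → Cand → Prop) [∀ n c, Decidable (edge n c)] (s : V → ℝ)
    (A : Finset Cand) (w : V → Cand → ℝ) (c' : Cand) (t : ℝ) : ℝ :=
  ∑ n ∈ approvers edge c', slack edge s A w n t

/-- `score(c') = max { t ≥ 0 : prescore(c', t) ≥ t }`. -/
noncomputable def score (edge : V → Cand → Prop) [∀ n c, Decidable (edge n c)] (s : V → ℝ)
    (A : Finset Cand) (w : V → Cand → ℝ) (c' : Cand) : ℝ :=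
  sSup {t : ℝ | 0 ≤ t ∧ t ≤ prescore edge s A w c' t}

/-- Proportional justified representation for a committee of target size `k`. -/
def PJR (edge : V → Cand → Prop) [∀ n c, Decidable (edge n c)] (s : V → ℝ)
    (k : ℕ) (A : Finset Cand) : Prop :=
  ¬ ∃ (N' : Finset V) (r : ℕ), 0 < r ∧ r ≤ k ∧
      (r : ℝ) / k * ∑ n, s n ≤ ∑ n ∈ N', s n ∧
      r ≤ (N'.inf (approves edge)).card ∧
      (A ∩ N'.sup (approves edge)).card < r

/-- Parametric proportional justified representation (`t`-PJR). -/
def tPJR (edge : V → Cand → Prop) [∀ n c, Decidable (edge n c)] (s : V → ℝ)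
    (A : Finset Cand) (t : ℝ) : Prop :=
  ¬ ∃ (N' : Finset V) (r : ℕ), 0 < r ∧ r ≤ A.card ∧
      (r : ℝ) * t ≤ ∑ n ∈ N', s n ∧
      r ≤ (N'.inf (approves edge)).card ∧
      (A ∩ N'.sup (approves edge)).card < r

end Defs

open MeasureTheory

section Helpers

set_option linter.unusedSectionVars false

variable {V Cand : Type*} [Fintype V] [Fintype Cand] [DecidableEq V] [DecidableEq Cand]
  {edge : V → Cand → Prop} [∀ n c, Decidable (edge n c)] {s : V → ℝ}
  {A : Finset Cand} {w : V → Cand → ℝ}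

/-! ### Balanced weights -/

theorem supp_eq_sum (hw : Feasible edge s w) (c : Cand) : supp edge w c = ∑ n, w n c := by
  unfold supp approvers
  rw [Finset.sum_filter]
  refine Finset.sum_congr rfl fun n _ => ?_
  split_ifs with h
  · rfl
  · exact (hw.2.1 n c h).symm

theorem supp_nonneg (hw : Feasible edge s w) (c : Cand) : 0 ≤ supp edge w c :=
  Finset.sum_nonneg fun n _ => hw.1 n c

theorem sum_le_strength (hw : Feasible edge s w) (n : V) (B : Finset Cand) :
    ∑ c ∈ B, w n c ≤ s n := by
  refine le_trans ?_ (hw.2.2 n)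
  calc ∑ c ∈ B, w n c ≤ ∑ c, w n c :=
        Finset.sum_le_sum_of_subset_of_nonneg (Finset.subset_univ _) fun c _ _ => hw.1 n c
    _ = ∑ c ∈ approves edge n, w n c := by
        symm
        refine Finset.sum_subset (Finset.subset_univ _) fun c _ hc => hw.2.1 n c ?_
        simpa [approves] using hc

theorem sum_inter_approves (hw : Feasible edge s w) (n : V) :
    ∑ c ∈ A ∩ approves edge n, w n c = ∑ c ∈ A, w n c := by
  refine Finset.sum_subset Finset.inter_subset_left fun c hc h => hw.2.1 n c fun he => h ?_
  simp [approves, hc, he]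

/-- The weight vector obtained from `w` by adding `d` to the weights of the single voter `n`. -/
def shift (w : V → Cand → ℝ) (n : V) (d : Cand → ℝ) : V → Cand → ℝ :=
  fun m c => w m c + if m = n then d c else 0

theorem feasible_shift (hw : Feasible edge s w) {n : V} {d : Cand → ℝ}
    (hd : ∀ c, ¬ edge n c → d c = 0) (hpos : ∀ c, 0 ≤ w n c + d c)
    (hsum : ∑ c, w n c + ∑ c, d c ≤ s n) : Feasible edge s (shift w n d) := by
  refine ⟨fun m c => ?_, fun m c h => ?_, fun m => ?_⟩
  · by_cases hm : m = n
    · subst hm; simpa [shift] using hpos c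
    · simpa [shift, hm] using hw.1 m c
  · by_cases hm : m = n
    · subst hm; simp [shift, hd c h, hw.2.1 m c h]
    · simp [shift, hm, hw.2.1 m c h]
  · by_cases hm : m = n
    · subst hm
      refine le_trans (Finset.sum_le_sum_of_subset_of_nonneg (Finset.subset_univ _) ?_) (?_ : _ ≤ s m)
      · intro c _ _; simpa [shift] using hpos c
      · simpa [shift, Finset.sum_add_distrib] using hsum
    · simpa [shift, hm] using hw.2.2 m

theorem supp_shift (hw : Feasible edge s w) {n : V} {d : Cand → ℝ}
    (hw' : Feasible edge s (shift w n d)) (c : Cand) :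
    supp edge (shift w n d) c = supp edge w c + d c := by
  rw [supp_eq_sum hw', supp_eq_sum hw]
  simp [shift, Finset.sum_add_distrib]

/-- In a balanced solution, a voter approving some member of the committee spends her whole
strength on the committee. -/
theorem sum_weights_eq (hbal : BalancedWeight edge s A w) {n : V} {c₀ : Cand} (hc₀ : c₀ ∈ A)
    (he : edge n c₀) : ∑ c ∈ A, w n c = s n := by
  obtain ⟨hw, hmax, -⟩ := hbal
  refine le_antisymm (sum_le_strength hw n A) ?_
  by_contra! hlt
  set g := s n - ∑ c ∈ A, w n c with hg
  -- Move the weight spent outside `A`, and any unspent strength, to `c₀`.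
  let d : Cand → ℝ := fun c => (if c = c₀ then g else 0) - (if c ∈ A then 0 else w n c)
  have hgpos : 0 < g := by linarith
  have hsplit : ∑ c, w n c = ∑ c ∈ A, w n c + ∑ c, (if c ∈ A then 0 else w n c) := by
    have h1 : ∑ c ∈ A, w n c = ∑ c, (if c ∈ A then w n c else 0) := by simp
    rw [h1, ← Finset.sum_add_distrib]
    refine Finset.sum_congr rfl fun c _ => ?_
    split_ifs <;> simp
  have hf : Feasible edge s (shift w n d) := by
    refine feasible_shift hw (fun c hc => ?_) (fun c => ?_) ?_
    · have : c ≠ c₀ := by rintro rfl; exact hc he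
      simp [d, this, hw.2.1 n c hc]
    · have := hw.1 n c
      simp only [d]
      split_ifs <;> linarith
    · simp only [d, Finset.sum_sub_distrib]
      rw [hsplit]
      simp [hg]
  have h := hmax _ hf
  simp only [supp_shift hw hf, Finset.sum_add_distrib] at h
  have hdA : ∑ c ∈ A, d c = g := by
    have : ∑ c ∈ A, d c = ∑ c ∈ A, (if c = c₀ then g else 0) :=
      Finset.sum_congr rfl fun c hc => by simp [d, hc]
    rw [this]; simp [hc₀]
  linarith

/-- In a balanced solution, a voter gives no weight to a member of the committee when she approves
another member of strictly smaller support. -/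
theorem weight_eq_zero (hbal : BalancedWeight edge s A w) {n : V} {c₀ c₁ : Cand} (hc₀ : c₀ ∈ A)
    (hc₁ : c₁ ∈ A) (he₀ : edge n c₀) (hlt : supp edge w c₀ < supp edge w c₁) : w n c₁ = 0 := by
  obtain ⟨hw, -, hmin⟩ := hbal
  by_contra hne
  have hwpos : 0 < w n c₁ := lt_of_le_of_ne (hw.1 n c₁) (Ne.symm hne)
  have he₁ : edge n c₁ := by
    by_contra h; exact hne (hw.2.1 n c₁ h)
  have hcc : c₀ ≠ c₁ := by rintro rfl; exact lt_irrefl _ hlt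
  -- Moving a small `ε` from `c₁` to `c₀` keeps the sum and decreases the sum of squares.
  obtain ⟨ε, hε0, hε1, hε2⟩ : ∃ ε : ℝ, 0 < ε ∧ ε ≤ w n c₁ ∧
      ε < supp edge w c₁ - supp edge w c₀ := by
    refine ⟨min (w n c₁) ((supp edge w c₁ - supp edge w c₀) / 2), ?_, min_le_left _ _, ?_⟩
    · exact lt_min hwpos (by linarith)
    · exact lt_of_le_of_lt (min_le_right _ _) (by linarith)
  let d : Cand → ℝ := fun c => (if c = c₀ then ε else 0) - (if c = c₁ then ε else 0)
  have hf : Feasible edge s (shift w n d) := by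
    refine feasible_shift hw (fun c hc => ?_) (fun c => ?_) ?_
    · have h0 : c ≠ c₀ := by rintro rfl; exact hc he₀
      have h1 : c ≠ c₁ := by rintro rfl; exact hc he₁
      simp [d, h0, h1]
    · have := hw.1 n c
      simp only [d]
      split_ifs with h0 h1 h1
      · linarith
      · linarith
      · subst h1; linarith
      · linarith
    · have := sum_le_strength hw n Finset.univ
      simpa [d, Finset.sum_sub_distrib] using this
  have hsum : ∑ c ∈ A, supp edge (shift w n d) c = ∑ c ∈ A, supp edge w c := by
    simp only [supp_shift hw hf, Finset.sum_add_distrib]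
    simp [d, Finset.sum_sub_distrib, hc₀, hc₁]
  have h := hmin _ hf hsum
  have hsq : ∑ c ∈ A, (supp edge (shift w n d) c) ^ 2 = ∑ c ∈ A, (supp edge w c) ^ 2 +
      (2 * ε * supp edge w c₀ + ε ^ 2 - (2 * ε * supp edge w c₁ - ε ^ 2)) := by
    have : ∀ c ∈ A, (supp edge (shift w n d) c) ^ 2 = (supp edge w c) ^ 2 +
        ((if c = c₀ then 2 * ε * supp edge w c₀ + ε ^ 2 else 0) -
          (if c = c₁ then 2 * ε * supp edge w c₁ - ε ^ 2 else 0)) := by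
      intro c _
      rw [supp_shift hw hf]
      simp only [d]
      split_ifs with h0 h1 h1
      · exact absurd (h0.symm.trans h1) hcc
      · subst h0; ring
      · subst h1; ring
      · ring
    rw [Finset.sum_congr rfl this, Finset.sum_add_distrib, Finset.sum_sub_distrib]
    simp [hc₀, hc₁]
  rw [hsq] at h
  nlinarith

/-! ### The counting bound -/

/-- The levels `τ` at which voter `n` is high: every member of `A` she approves has support at
least `τ`. Every level qualifies for a voter approving no member of `A`. -/
def highSet (edge : V → Cand → Prop) (A : Finset Cand) [∀ n c, Decidable (edge n c)]
    (w : V → Cand → ℝ) (n : V) : Set ℝ :=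
  {τ | ∀ c ∈ A, edge n c → τ ≤ supp edge w c}

open Classical in
/-- Voters high at level `τ`, counted once for each candidate of `Astar \ A` they approve, have
total strength at least `|Astar \ A| * (T - τ)`, if `w` is balanced for `A`, `|A| ≤ |Astar|`, and
some feasible vector supports every member of `Astar` with at least `T`. -/
theorem high_strength {Astar : Finset Cand} {wstar : V → Cand → ℝ} {T : ℝ}
    (hwstar : Feasible edge s wstar) (hT : ∀ c ∈ Astar, T ≤ supp edge wstar c)
    (hbal : BalancedWeight edge s A w) (hcard : A.card ≤ Astar.card)
    {τ : ℝ} (hτ0 : 0 ≤ τ) (hτT : τ ≤ T) :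
    ((Astar \ A).card : ℝ) * (T - τ) ≤
      ∑ c ∈ Astar \ A, ∑ n ∈ approvers edge c, if τ ∈ highSet edge A w n then s n else 0 := by
  have hw := hbal.1
  set D := Astar \ A with hD
  set X := A.filter fun c => supp edge w c < τ with hX
  have hdisj : Disjoint D (X ∩ Astar) := by
    rw [Finset.disjoint_left]
    intro c hc hc'
    simp [hD, hX] at hc hc'
    exact hc.2 hc'.1.1
  have hlow_strength :
      ∑ n, (if τ ∈ highSet edge A w n then 0 else s n) ≤ (X.card : ℝ) * τ := by
    calc ∑ n, (if τ ∈ highSet edge A w n then 0 else s n) ≤ ∑ n, ∑ c ∈ X, w n c := by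
          refine Finset.sum_le_sum fun n _ => ?_
          split_ifs with h
          · exact Finset.sum_nonneg fun c _ => hw.1 n c
          · simp only [highSet, Set.mem_ofPred_eq, not_forall, not_le] at h
            obtain ⟨c₀, hc₀, he₀, hlt⟩ := h
            rw [← sum_weights_eq hbal hc₀ he₀]
            refine le_of_eq (Finset.sum_subset (Finset.filter_subset _ _) fun c hc hcX => ?_).symm
            refine weight_eq_zero hbal hc₀ hc he₀ (lt_of_lt_of_le hlt ?_)
            by_contra! hh
            exact hcX (by simp [hc, hh])
      _ = ∑ c ∈ X, supp edge w c := by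
          rw [Finset.sum_comm]
          exact Finset.sum_congr rfl fun c _ => (supp_eq_sum hw c).symm
      _ ≤ ∑ _c ∈ X, τ := by
          refine Finset.sum_le_sum fun c hc => ?_
          simp [hX] at hc
          exact hc.2.le
      _ = (X.card : ℝ) * τ := by simp
  have hsupply : ((D.card : ℝ) + (X ∩ Astar).card) * T ≤
      ∑ n, ∑ c ∈ D ∪ (X ∩ Astar), wstar n c := by
    calc ((D.card : ℝ) + (X ∩ Astar).card) * T = ∑ _c ∈ D ∪ (X ∩ Astar), T := by
          rw [Finset.sum_const, Finset.card_union_of_disjoint hdisj]; simp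
      _ ≤ ∑ c ∈ D ∪ (X ∩ Astar), supp edge wstar c := by
          refine Finset.sum_le_sum fun c hc => hT c ?_
          simp [hD] at hc
          tauto
      _ = _ := by
          rw [Finset.sum_comm]
          exact Finset.sum_congr rfl fun c _ => supp_eq_sum hwstar c
  have hbound : ∑ n, ∑ c ∈ D ∪ (X ∩ Astar), wstar n c ≤
      ∑ n, ((if τ ∈ highSet edge A w n then 0 else s n) +
        ∑ c ∈ D, if edge n c then (if τ ∈ highSet edge A w n then s n else 0) else 0) := by
    refine Finset.sum_le_sum fun n _ => ?_
    by_cases h : τ ∈ highSet edge A w n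
    · rw [Finset.sum_union hdisj]
      have h0 : ∑ c ∈ X ∩ Astar, wstar n c = 0 := by
        refine Finset.sum_eq_zero fun c hc => hwstar.2.1 n c fun he => ?_
        simp [hX] at hc
        exact absurd (h c hc.1.1 he) (not_le.mpr hc.1.2)
      simp only [h, if_true, h0, add_zero, zero_add]
      refine Finset.sum_le_sum fun c _ => ?_
      split_ifs with he
      · simpa using sum_le_strength hwstar n {c}
      · exact (hwstar.2.1 n c he).le
    · simpa [h] using sum_le_strength hwstar n (D ∪ (X ∩ Astar))
  rw [Finset.sum_add_distrib] at hbound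
  have hswap : ∑ n, ∑ c ∈ D, (if edge n c then (if τ ∈ highSet edge A w n then s n else 0) else 0)
      = ∑ c ∈ D, ∑ n ∈ approvers edge c, if τ ∈ highSet edge A w n then s n else 0 := by
    rw [Finset.sum_comm]
    refine Finset.sum_congr rfl fun c _ => ?_
    rw [approvers, Finset.sum_filter]
  rw [hswap] at hbound
  have hXD : X.card ≤ (X ∩ Astar).card + D.card := by
    have h1 := Finset.card_inter_add_card_sdiff X Astar
    have h2 : (X \ Astar).card ≤ (A \ Astar).card :=
      Finset.card_le_card (Finset.sdiff_subset_sdiff (Finset.filter_subset _ _) le_rfl)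
    have h3 := Finset.card_inter_add_card_sdiff A Astar
    have h4 := Finset.card_inter_add_card_sdiff Astar A
    rw [Finset.inter_comm, ← hD] at h4
    omega
  have hXD' : (X.card : ℝ) ≤ (X ∩ Astar).card + D.card := by exact_mod_cast hXD
  have h5 := mul_le_mul_of_nonneg_right hXD' hτ0
  have h6 : (0 : ℝ) ≤ (X ∩ Astar).card * (T - τ) :=
    mul_nonneg (Nat.cast_nonneg _) (by linarith)
  linarith

/-! ### Slack as an integral over levels -/

theorem measurableSet_highSet (n : V) : MeasurableSet (highSet edge A w n) := by
  have : highSet edge A w n = ⋂ c ∈ A, ⋂ _ : edge n c, Set.Iic (supp edge w c) := by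
    ext τ; simp [highSet]
  rw [this]
  exact Finset.measurableSet_biInter _ fun c _ => MeasurableSet.iInter fun _ => measurableSet_Iic

theorem intervalIntegrable_kernel {t T : ℝ} (ht : 0 < t) (htT : t ≤ T) :
    IntervalIntegrable (fun τ : ℝ => t / τ ^ 2) volume t T := by
  refine ContinuousOn.intervalIntegrable fun x hx => ?_
  rw [Set.uIcc_of_le htT] at hx
  have : x ≠ 0 := by linarith [hx.1]
  exact (continuousAt_const.div (by fun_prop) (by positivity)).continuousWithinAt

theorem intervalIntegrable_indicator {t T : ℝ} (ht : 0 < t) (htT : t ≤ T) {S : Set ℝ}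
    (hS : MeasurableSet S) :
    IntervalIntegrable (S.indicator fun τ : ℝ => t / τ ^ 2) volume t T := by
  have h := intervalIntegrable_kernel ht htT
  rw [intervalIntegrable_iff] at h ⊢
  exact h.indicator hS

theorem integral_kernel {t p : ℝ} (ht : 0 < t) (hp : t ≤ p) :
    ∫ τ in t..p, t / τ ^ 2 = 1 - t / p := by
  rw [intervalIntegral.integral_eq_sub_of_hasDerivAt (f := fun τ => -(t / τ)) _
    (intervalIntegrable_kernel ht hp)]
  · rw [div_self ht.ne']; ring
  · intro x hx
    rw [Set.uIcc_of_le hp] at hx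
    have hx0 : x ≠ 0 := by linarith [hx.1]
    have := ((hasDerivAt_inv hx0).const_mul t).fun_neg
    simp only [← div_eq_mul_inv] at this
    convert this using 1
    ring

theorem integral_indicator_le {t T p : ℝ} (ht : 0 < t) (htT : t ≤ T) {S : Set ℝ}
    (hS : MeasurableSet S) (hSp : ∀ τ ∈ S, τ ≤ p) :
    ∫ τ in t..T, S.indicator (fun τ => t / τ ^ 2) τ ≤ 1 - min 1 (t / p) := by
  rcases lt_or_ge p t with h | h
  · have : ∫ τ in t..T, S.indicator (fun τ => t / τ ^ 2) τ = 0 := by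
      rw [intervalIntegral.integral_congr (g := fun _ => (0 : ℝ))]
      · simp
      · intro x hx
        rw [Set.uIcc_of_le htT] at hx
        refine Set.indicator_of_notMem (fun hxS => ?_) _
        linarith [hSp x hxS, hx.1]
    rw [this]
    linarith [min_le_left 1 (t / p)]
  · have hp0 : 0 < p := ht.trans_le h
    set q := min p T with hq
    have htq : t ≤ q := le_min h htT
    have hqT : q ≤ T := min_le_right _ _
    have hle : ∫ τ in t..T, S.indicator (fun τ => t / τ ^ 2) τ ≤
        ∫ τ in t..T, (Set.Iic q).indicator (fun τ => t / τ ^ 2) τ := by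
      refine intervalIntegral.integral_mono_on htT (intervalIntegrable_indicator ht htT hS)
        (intervalIntegrable_indicator ht htT measurableSet_Iic) fun x hx => ?_
      by_cases hxS : x ∈ S
      · have hxq : x ∈ Set.Iic q := le_min (hSp x hxS) hx.2
        rw [Set.indicator_of_mem hxS, Set.indicator_of_mem hxq]
      · rw [Set.indicator_of_notMem hxS]
        exact Set.indicator_nonneg (fun y _ => by positivity) x
    have heq : ∫ τ in t..T, (Set.Iic q).indicator (fun τ => t / τ ^ 2) τ =
        ∫ τ in t..q, t / τ ^ 2 := intervalIntegral.integral_indicator ⟨htq, hqT⟩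
    rw [heq, integral_kernel ht htq] at hle
    have h1 : t / p ≤ t / q := div_le_div_of_nonneg_left ht.le (ht.trans_le htq) (min_le_left _ _)
    linarith [min_le_right 1 (t / p)]

/-- The slack of a voter dominates her strength times the mass of the levels at which she is high,
for the density `t / τ²` on `[t, T]`. -/
theorem integral_le_slack (hs : ∀ n, 0 ≤ s n) (hbal : BalancedWeight edge s A w)
    {t T : ℝ} (ht : 0 < t) (htT : t ≤ T) (n : V) :
    s n * ∫ τ in t..T, (highSet edge A w n).indicator (fun τ => t / τ ^ 2) τ ≤
      slack edge s A w n t := by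
  unfold slack
  by_cases hn : ∃ c ∈ A, edge n c
  · obtain ⟨c₀, hc₀, he₀⟩ := hn
    have hsn : s n = ∑ c ∈ A ∩ approves edge n, w n c := by
      rw [sum_inter_approves hbal.1, sum_weights_eq hbal hc₀ he₀]
    rw [hsn, Finset.sum_mul, ← Finset.sum_sub_distrib]
    refine Finset.sum_le_sum fun c hc => ?_
    simp only [Finset.mem_inter, approves, Finset.mem_filter, Finset.mem_univ, true_and] at hc
    have := integral_indicator_le (p := supp edge w c) ht htT
      (measurableSet_highSet (edge := edge) (A := A) (w := w) n) fun τ hτ => hτ c hc.1 hc.2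
    calc _ ≤ w n c * (1 - min 1 (t / supp edge w c)) :=
          mul_le_mul_of_nonneg_left this (hbal.1.1 n c)
      _ = _ := by ring
  · push Not at hn
    have hempty : A ∩ approves edge n = ∅ := by
      ext c
      simp only [Finset.mem_inter, approves, Finset.mem_filter, Finset.mem_univ, true_and,
        Finset.notMem_empty, iff_false, not_and]
      exact hn c
    rw [hempty, Finset.sum_empty, sub_zero]
    -- With no approved member the voter is high at every level; cutting the
    -- levels at `T` bounds the integral by `1`.
    have := integral_indicator_le (p := T) ht htT
      ((measurableSet_highSet (edge := edge) (A := A) (w := w) n).inter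
        (measurableSet_Iic (a := T))) fun τ hτ => hτ.2
    have hcongr : ∫ τ in t..T, (highSet edge A w n).indicator (fun τ => t / τ ^ 2) τ =
        ∫ τ in t..T, (highSet edge A w n ∩ Set.Iic T).indicator (fun τ => t / τ ^ 2) τ := by
      refine intervalIntegral.integral_congr fun x hx => ?_
      rw [Set.uIcc_of_le htT] at hx
      by_cases hxS : x ∈ highSet edge A w n <;> simp [Set.indicator, hxS, hx.2]
    have hmin : 0 ≤ min 1 (t / T) := le_min zero_le_one (div_nonneg ht.le (ht.le.trans htT))
    rw [hcongr]
    exact mul_le_of_le_one_right (hs n) (by linarith)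

theorem integral_target {t T : ℝ} (ht : 0 < t) (htT : t ≤ T) :
    ∫ τ in t..T, (T - τ) * (t / τ ^ 2) = T - t + t * (Real.log t - Real.log T) := by
  have hint : IntervalIntegrable (fun τ : ℝ => (T - τ) * (t / τ ^ 2)) volume t T :=
    (intervalIntegrable_kernel ht htT).continuousOn_mul (by fun_prop)
  rw [intervalIntegral.integral_eq_sub_of_hasDerivAt
    (f := fun τ => t * (-(T * τ⁻¹) - Real.log τ)) _ hint]
  · have : T ≠ 0 := by linarith
    field_simp
    ring
  · intro x hx
    rw [Set.uIcc_of_le htT] at hx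
    have hx0 : x ≠ 0 := by linarith [hx.1]
    have : HasDerivAt (fun τ => t * (-(T * τ⁻¹) - Real.log τ))
        (t * (-(T * -(x ^ 2)⁻¹) - x⁻¹)) x :=
      ((((hasDerivAt_inv hx0).const_mul T).neg).sub (Real.hasDerivAt_log hx0)).const_mul t
    refine this.congr_deriv ?_
    field_simp

end Helpers

theorem prescore_sum_lower_bound
    {V Cand : Type*} [Fintype V] [Fintype Cand] [DecidableEq V] [DecidableEq Cand]
    (edge : V → Cand → Prop) [∀ n c, Decidable (edge n c)]
    (s : V → ℝ) (hs : ∀ n, 0 ≤ s n) (k : ℕ) (hk : 0 < k)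
    (Astar : Finset Cand) (wstar : V → Cand → ℝ) (tstar : ℝ)
    (hwstar : Feasible edge s wstar) (hAstar : Astar.card = k)
    (htstar : suppMin edge wstar Astar = (tstar : EReal))
    (hopt : ∀ (B : Finset Cand) (v : V → Cand → ℝ), Feasible edge s v → B.card = k →
      suppMin edge v B ≤ suppMin edge wstar Astar)
    (A : Finset Cand) (w : V → Cand → ℝ)
    (hbal : BalancedWeight edge s A w) (hAk : A.card ≤ k) (hne : A ≠ Astar)
    (a : ℝ) (ha : 0 < a) (ha1 : a ≤ 1) :
    ((Astar \ A).card : ℝ) * (a * tstar) * (1 / a - 1 + Real.log a) ≤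
      ∑ c' ∈ Astar \ A, prescore edge s A w c' (a * tstar) := by
  classical
  have hT : ∀ c ∈ Astar, tstar ≤ supp edge wstar c := by
    intro c hc
    have : suppMin edge wstar Astar ≤ (supp edge wstar c : EReal) := Finset.inf_le hc
    rw [htstar] at this
    exact_mod_cast this
  have hT0 : 0 ≤ tstar := by
    have : ((0 : ℝ) : EReal) ≤ suppMin edge wstar Astar :=
      Finset.le_inf fun c _ => by exact_mod_cast supp_nonneg hwstar c
    rw [htstar] at this
    exact_mod_cast this
  rcases hT0.eq_or_lt with h0 | hTpos
  · -- At threshold `0` the slack of each voter is her full strength.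
    rw [← h0]
    simp only [mul_zero, zero_mul]
    refine Finset.sum_nonneg fun c _ => Finset.sum_nonneg fun n _ => ?_
    simpa [slack] using hs n
  set t := a * tstar with ht_def
  have ht : 0 < t := mul_pos ha hTpos
  have htT : t ≤ tstar := by nlinarith
  set D := Astar \ A with hD
  have hI : ∀ n, IntervalIntegrable
      (fun τ => s n * (highSet edge A w n).indicator (fun τ => t / τ ^ 2) τ) volume t tstar :=
    fun n => (intervalIntegrable_indicator ht htT (measurableSet_highSet n)).const_mul _
  have hsumI : ∀ c, IntervalIntegrable (fun τ => ∑ n ∈ approvers edge c,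
      s n * (highSet edge A w n).indicator (fun τ => t / τ ^ 2) τ) volume t tstar := by
    intro c
    have := IntervalIntegrable.sum (approvers edge c) (fun n _ => hI n)
    simpa only [Finset.sum_fn] using this
  have hsumI' : IntervalIntegrable (fun τ => ∑ c ∈ D, ∑ n ∈ approvers edge c,
      s n * (highSet edge A w n).indicator (fun τ => t / τ ^ 2) τ) volume t tstar := by
    have := IntervalIntegrable.sum D (fun c _ => hsumI c)
    simpa only [Finset.sum_fn] using this
  calc (D.card : ℝ) * t * (1 / a - 1 + Real.log a)
      = ∫ τ in t..tstar, (D.card : ℝ) * ((tstar - τ) * (t / τ ^ 2)) := by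
        rw [intervalIntegral.integral_const_mul, integral_target ht htT, ht_def,
          Real.log_mul ha.ne' hTpos.ne']
        field_simp
        ring
    _ ≤ ∫ τ in t..tstar, ∑ c ∈ D, ∑ n ∈ approvers edge c,
          s n * (highSet edge A w n).indicator (fun τ => t / τ ^ 2) τ := by
        refine intervalIntegral.integral_mono_on htT
          (((intervalIntegrable_kernel ht htT).continuousOn_mul (by fun_prop)).const_mul _)
          hsumI' fun τ hτ => ?_
        have h := high_strength hwstar hT hbal (hAk.trans hAstar.ge)
          (ht.le.trans hτ.1) hτ.2
        have hk0 : 0 ≤ t / τ ^ 2 := by positivity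
        have h' := mul_le_mul_of_nonneg_right h hk0
        rw [Finset.sum_mul] at h'
        rw [← mul_assoc]
        refine h'.trans (le_of_eq ?_)
        refine Finset.sum_congr rfl fun c _ => ?_
        rw [Finset.sum_mul]
        refine Finset.sum_congr rfl fun n _ => ?_
        by_cases hh : τ ∈ highSet edge A w n <;> simp [hh]
    _ = ∑ c ∈ D, ∑ n ∈ approvers edge c,
          s n * ∫ τ in t..tstar, (highSet edge A w n).indicator (fun τ => t / τ ^ 2) τ := by
        rw [intervalIntegral.integral_finsetSum fun c _ => hsumI c]
        refine Finset.sum_congr rfl fun c _ => ?_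
        rw [intervalIntegral.integral_finsetSum fun n _ => hI n]
        exact Finset.sum_congr rfl fun n _ => intervalIntegral.integral_const_mul _ _
    _ ≤ ∑ c' ∈ D, prescore edge s A w c' t :=
        Finset.sum_le_sum fun c _ => Finset.sum_le_sum fun n _ =>
          integral_le_slack hs hbal ht htT n
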